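/- arXiv:2410.13479 — 8 statements merged into one kernel-verified Lean document; each statement's English description precedes it below -/
import Mathlib

section
/- Let μ be a probability measure on a measurable space T and let L, L' : Q → Set T be families of measurable sets with L q ⊆ L' q for every q : Q. Define h t = { q | t ∈ L q } and h' t = { q | t ∈ L' q }. Then the fibers { t | h t = P } and { t | h' t = P } are measurable for every P : Set Q, the induced distributions μ⃗(h) and μ⃗(h') are distributions on 𝒫(Q), and μ⃗(h) ⪯ μ⃗(h'). -/
open MeasureTheory

/-- A family `U : Set (Set Q)` is upward-closed if `P ∈ U` and `P ⊆ P'` imply `P' ∈ U`. -/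
def UpwardClosed {Q : Type*} (U : Set (Set Q)) : Prop :=
  ∀ ⦃P P' : Set Q⦄, P ∈ U → P ⊆ P' → P' ∈ U

/-- A distribution on `𝒫(Q)`: a nonnegative function on `Set Q` summing to `1`. -/
def IsDistribution {Q : Type*} [Fintype Q] (α : Set Q → ℝ) : Prop :=
  (∀ P, 0 ≤ α P) ∧ ∑ P : Set Q, α P = 1

/-- `α ⪯ β` iff for every upward-closed `U ⊆ 𝒫(Q)`, `∑_{P ∈ U} α P ≤ ∑_{P ∈ U} β P`. -/
def DistLE {Q : Type*} [Fintype Q] (α β : Set Q → ℝ) : Prop :=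
  ∀ U : Set (Set Q), UpwardClosed U → ∑ᶠ P ∈ U, α P ≤ ∑ᶠ P ∈ U, β P

/-- The distribution on `𝒫(Q)` induced by a measure `μ` and a map `h : T → Set Q`:
`μ⃗(h)(P) = μ { t | h t = P }`. -/
noncomputable def inducedDist {T : Type*} [MeasurableSpace T] (μ : Measure T)
    {Q : Type*} (h : T → Set Q) : Set Q → ℝ :=
  fun P => (μ { t | h t = P }).toReal

theorem aux_fiber {Q : Type*} [Fintype Q] {T : Type*} [MeasurableSpace T]
    (L : Q → Set T) (hL : ∀ q, MeasurableSet (L q)) (P : Set Q) :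
    MeasurableSet { t | { q | t ∈ L q } = P } := by
  have : { t | { q | t ∈ L q } = P } = ⋂ q, { t | t ∈ L q ↔ q ∈ P } := by
    ext t
    simp [Set.ext_iff]
  rw [this]
  refine MeasurableSet.iInter fun q => ?_
  by_cases hq : q ∈ P
  · simpa [hq] using hL q
  · simp only [hq, iff_false]
    exact (hL q).compl

theorem aux_sum {Q : Type*} [Fintype Q] {T : Type*} [MeasurableSpace T]
    (μ : Measure T) [IsProbabilityMeasure μ] (h : T → Set Q)
    (hh : ∀ P, MeasurableSet { t | h t = P }) (U : Set (Set Q)) :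
    ∑ᶠ P ∈ U, inducedDist μ h P = (μ (h ⁻¹' U)).toReal := by
  classical
  rw [finsum_mem_eq_finite_toFinset_sum _ U.toFinite]
  have : h ⁻¹' U = ⋃ P ∈ U.toFinite.toFinset, { t | h t = P } := by
    ext t
    simp
  rw [this, measure_biUnion_finset _ (fun P _ => hh P),
    ENNReal.toReal_sum (fun P _ => measure_ne_top _ _)]
  · rfl
  · intro P _ P' _ hne
    refine Set.disjoint_left.2 fun t ht ht' => hne ?_
    exact ht.symm.trans ht'

theorem aux_dist {Q : Type*} [Fintype Q] {T : Type*} [MeasurableSpace T]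
    (μ : Measure T) [IsProbabilityMeasure μ] (h : T → Set Q)
    (hh : ∀ P, MeasurableSet { t | h t = P }) : IsDistribution (inducedDist μ h) := by
  refine ⟨fun P => ENNReal.toReal_nonneg, ?_⟩
  have := aux_sum μ h hh Set.univ
  rw [finsum_mem_univ, finsum_eq_sum_of_fintype] at this
  rw [this]
  simp

/-- Let `μ` be a probability measure on `T` and `L, L' : Q → Set T` families of measurable sets
with `L q ⊆ L' q` for every `q`. With `h t = { q | t ∈ L q }` and `h' t = { q | t ∈ L' q }`,
the fibers of `h` and `h'` are measurable, the induced distributions `μ⃗(h)` and `μ⃗(h')` are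
distributions on `𝒫(Q)`, and `μ⃗(h) ⪯ μ⃗(h')`. -/
theorem inducedDist_mono {Q : Type*} [Fintype Q] {T : Type*} [MeasurableSpace T]
    (μ : Measure T) [IsProbabilityMeasure μ]
    (L L' : Q → Set T) (hL : ∀ q, MeasurableSet (L q)) (hL' : ∀ q, MeasurableSet (L' q))
    (hsub : ∀ q, L q ⊆ L' q) :
    (∀ P : Set Q, MeasurableSet { t | { q | t ∈ L q } = P }) ∧
    (∀ P : Set Q, MeasurableSet { t | { q | t ∈ L' q } = P }) ∧
    IsDistribution (inducedDist μ fun t => { q | t ∈ L q }) ∧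
    IsDistribution (inducedDist μ fun t => { q | t ∈ L' q }) ∧
    DistLE (inducedDist μ fun t => { q | t ∈ L q })
      (inducedDist μ fun t => { q | t ∈ L' q }) := by
  have h1 := aux_fiber L hL
  have h2 := aux_fiber L' hL'
  refine ⟨h1, h2, aux_dist μ _ h1, aux_dist μ _ h2, fun U hU => ?_⟩
  rw [aux_sum μ _ h1, aux_sum μ _ h2]
  refine ENNReal.toReal_mono (measure_ne_top _ _) (measure_mono fun t ht => ?_)
  exact hU ht fun q hq => hsub q hq
end

section
/- Let α and β be distributions on 𝒫(Q) with α ⪯ β, and let O ⊆ Set Q × Set Q be upward-closed for componentwise inclusion (if P_L ⊆ P_L', P_R ⊆ P_R', and (P_L, P_R) ∈ O, then (P_L', P_R') ∈ O). Then ∑_{(P_L, P_R) ∈ O} α(P_L)·α(P_R) ≤ ∑_{(P_L, P_R) ∈ O} β(P_L)·β(P_R). -/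
open Classical in
theorem aux_left {Q : Type*} [Fintype Q] (f g : Set Q → ℝ) (O : Set (Set Q × Set Q)) :
    ∑ᶠ p ∈ O, f p.1 * g p.2 = ∑ P : Set Q, f P * ∑ᶠ R ∈ {R | (P, R) ∈ O}, g R := by
  simp only [finsum_eq_sum_of_fintype, finsum_eq_if, Fintype.sum_prod_type, Finset.mul_sum,
    Set.mem_setOf_eq, mul_ite, mul_zero]

open Classical in
theorem aux_right {Q : Type*} [Fintype Q] (f g : Set Q → ℝ) (O : Set (Set Q × Set Q)) :
    ∑ᶠ p ∈ O, f p.1 * g p.2 = ∑ R : Set Q, g R * ∑ᶠ P ∈ {P | (P, R) ∈ O}, f P := by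
  simp only [finsum_eq_sum_of_fintype, finsum_eq_if, Fintype.sum_prod_type_right, Finset.mul_sum,
    Set.mem_setOf_eq, mul_ite, mul_zero, mul_comm]

/-- If `α ⪯ β` are distributions on `𝒫(Q)` and `O ⊆ Set Q × Set Q` is upward-closed for
componentwise inclusion, then
`∑_{(P_L,P_R) ∈ O} α(P_L)·α(P_R) ≤ ∑_{(P_L,P_R) ∈ O} β(P_L)·β(P_R)`. -/
theorem sum_prod_mono {Q : Type*} [Fintype Q] (α β : Set Q → ℝ)
    (hα : IsDistribution α) (hβ : IsDistribution β) (hle : DistLE α β)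
    (O : Set (Set Q × Set Q))
    (hO : ∀ ⦃PL PR PL' PR' : Set Q⦄,
      (PL, PR) ∈ O → PL ⊆ PL' → PR ⊆ PR' → (PL', PR') ∈ O) :
    ∑ᶠ p ∈ O, α p.1 * α p.2 ≤ ∑ᶠ p ∈ O, β p.1 * β p.2 := by
  calc ∑ᶠ p ∈ O, α p.1 * α p.2 ≤ ∑ᶠ p ∈ O, α p.1 * β p.2 := by
        rw [aux_left, aux_left]
        exact Finset.sum_le_sum fun P _ => mul_le_mul_of_nonneg_left
          (hle _ fun _ _ h h' => hO h subset_rfl h') (hα.1 P)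
    _ ≤ ∑ᶠ p ∈ O, β p.1 * β p.2 := by
        rw [aux_right, aux_right]
        exact Finset.sum_le_sum fun P _ => mul_le_mul_of_nonneg_left
          (hle _ fun _ _ h h' => hO h h' subset_rfl) (hβ.1 P)
end

section
/- Suppose Δ : Set Q → A → Set Q → Set Q is monotone in its first and third arguments (if P_L ⊆ P_L' and P_R ⊆ P_R' then Δ P_L a P_R ⊆ Δ P_L' a P_R' for every a : A). Then the operator 𝓕 is monotone with respect to ⪯ on distributions on 𝒫(Q): if α ⪯ β then 𝓕(α) ⪯ 𝓕(β). -/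
/-- The operator `𝓕` induced by `Δ`:
`𝓕(β)(P) = (1 / card A) · ∑_{(P_L, a, P_R) with Δ P_L a P_R = P} β(P_L)·β(P_R)`. -/
noncomputable def FOp {A Q : Type*} [Fintype A] [Fintype Q]
    (Δ : Set Q → A → Set Q → Set Q) (β : Set Q → ℝ) (P : Set Q) : ℝ :=
  (1 / (Fintype.card A : ℝ)) *
    ∑ᶠ x ∈ { x : Set Q × A × Set Q | Δ x.1 x.2.1 x.2.2 = P }, β x.1 * β x.2.2

open Classical in
theorem finsum_mem_ite_aux {X : Type*} [Fintype X] (U : Set X) (f : X → ℝ) :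
    ∑ᶠ P ∈ U, f P = ∑ P, if P ∈ U then f P else 0 := by
  rw [finsum_mem_def, finsum_eq_sum_of_fintype]
  simp only [Set.indicator_apply]

open Classical in
theorem FOp_sum_aux {A Q : Type*} [Fintype A] [Fintype Q]
    (Δ : Set Q → A → Set Q → Set Q) (β : Set Q → ℝ) (U : Set (Set Q)) :
    ∑ᶠ P ∈ U, FOp Δ β P = (1 / (Fintype.card A : ℝ)) *
      ∑ a : A, ∑ L : Set Q, ∑ R : Set Q, if Δ L a R ∈ U then β L * β R else 0 := by
  have h1 : ∑ᶠ P ∈ U, FOp Δ β P = (1 / (Fintype.card A : ℝ)) *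
      ∑ x : Set Q × A × Set Q, if Δ x.1 x.2.1 x.2.2 ∈ U then β x.1 * β x.2.2 else 0 := by
    rw [finsum_mem_ite_aux]
    simp only [FOp, finsum_mem_ite_aux]
    simp only [Set.mem_ofPred_eq]
    rw [← Finset.sum_filter, ← Finset.mul_sum]
    congr 1
    rw [Finset.sum_comm]
    refine Finset.sum_congr rfl fun x _ => ?_
    have h := Finset.sum_ite_eq (Finset.univ.filter (· ∈ U)) (Δ x.1 x.2.1 x.2.2)
      (fun _ => β x.1 * β x.2.2)
    simp only [Finset.mem_filter, Finset.mem_univ, true_and] at h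
    convert h
  rw [h1]
  simp only [Fintype.sum_prod_type]
  rw [Finset.sum_comm]

/-- If `Δ` is monotone in its first and third arguments, then `𝓕` is monotone with respect to
`⪯` on distributions on `𝒫(Q)`: if `α ⪯ β` then `𝓕(α) ⪯ 𝓕(β)`. -/
theorem FOp_mono {A Q : Type*} [Fintype A] [Nonempty A] [Fintype Q]
    (Δ : Set Q → A → Set Q → Set Q)
    (hΔ : ∀ ⦃PL PL' PR PR' : Set Q⦄ (a : A),
      PL ⊆ PL' → PR ⊆ PR' → Δ PL a PR ⊆ Δ PL' a PR')
    (α β : Set Q → ℝ) (hα : IsDistribution α) (hβ : IsDistribution β)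
    (hle : DistLE α β) :
    DistLE (FOp Δ α) (FOp Δ β) := by
  classical
  intro U hU
  rw [FOp_sum_aux, FOp_sum_aux]
  refine mul_le_mul_of_nonneg_left (Finset.sum_le_sum fun a _ => ?_) (by positivity)
  have step : ∀ V : Set (Set Q), UpwardClosed V → ∀ c : ℝ, 0 ≤ c →
      (∑ P, if P ∈ V then c * α P else 0) ≤ ∑ P, if P ∈ V then c * β P else 0 := by
    intro V hV c hc
    have h := hle V hV
    rw [finsum_mem_ite_aux, finsum_mem_ite_aux] at h
    simp only [← mul_ite_zero, ← Finset.mul_sum]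
    exact mul_le_mul_of_nonneg_left h hc
  calc (∑ L : Set Q, ∑ R : Set Q, if Δ L a R ∈ U then α L * α R else 0)
      ≤ ∑ L : Set Q, ∑ R : Set Q, if Δ L a R ∈ U then α L * β R else 0 := by
        refine Finset.sum_le_sum fun L _ => ?_
        exact step {R | Δ L a R ∈ U}
          (fun P P' hP hs => hU hP (hΔ a subset_rfl hs)) (α L) (hα.1 L)
    _ = ∑ R : Set Q, ∑ L : Set Q, if Δ L a R ∈ U then β R * α L else 0 := by
        rw [Finset.sum_comm]
        simp only [mul_comm]
    _ ≤ ∑ R : Set Q, ∑ L : Set Q, if Δ L a R ∈ U then β R * β L else 0 := by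
        refine Finset.sum_le_sum fun R _ => ?_
        exact step {L | Δ L a R ∈ U}
          (fun P P' hP hs => hU hP (hΔ a hs subset_rfl)) (β R) (hβ.1 R)
    _ = ∑ L : Set Q, ∑ R : Set Q, if Δ L a R ∈ U then β L * β R else 0 := by
        rw [Finset.sum_comm]
        simp only [mul_comm]
end

section
/- Let Δ : Set Q → A → Set Q → Set Q and let h : Tr_A → Set Q be such that { t | h t = P } is μ₀-measurable for every P : Set Q. Define h'(t) = Δ (h (t↾[false])) (t []) (h (t↾[true])). Then { t | h' t = P } is measurable for every P, and the induced distribution of h' is obtained by applying 𝓕 to that of h: μ⃗₀(h') = 𝓕(μ⃗₀(h)), where μ⃗₀ denotes the induced distribution with respect to the uniform measure μ₀. -/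
open MeasureTheory

/-- The subtree of `t` induced by the word `v`: `(t↾v)(w) = t (v ++ w)`. -/
def subtree {A : Type*} (t : List Bool → A) (v : List Bool) : List Bool → A :=
  fun w => t (v ++ w)

/-- Assemble a tree from its root label and its two subtrees. -/
def glueTree {A : Type*} (x : A × (List Bool → A) × (List Bool → A)) : List Bool → A
  | [] => x.1
  | false :: w => x.2.1 w
  | true :: w => x.2.2 w

lemma measurable_glueTree {A : Type*} [MeasurableSpace A] :
    Measurable (glueTree : A × (List Bool → A) × (List Bool → A) → List Bool → A) := by
  rw [measurable_pi_iff]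
  intro w
  match w with
  | [] => exact measurable_fst
  | false :: w => exact (measurable_pi_apply w).comp (measurable_fst.comp measurable_snd)
  | true :: w => exact (measurable_pi_apply w).comp (measurable_snd.comp measurable_snd)

lemma prod_split {M : Type*} [CommMonoid M] (s : Finset (List Bool)) (f : List Bool → M) :
    ∏ i ∈ s, f i = (if [] ∈ s then f [] else 1) *
      ((∏ w ∈ s.preimage (List.cons false) (List.cons_injective.injOn), f (false :: w)) *
       (∏ w ∈ s.preimage (List.cons true) (List.cons_injective.injOn), f (true :: w))) := by
  classical
  rw [Finset.prod_preimage' (List.cons false), Finset.prod_preimage' (List.cons true),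
    Finset.prod_filter, Finset.prod_filter, ← Finset.prod_ite_eq s [] f,
    ← Finset.prod_mul_distrib, ← Finset.prod_mul_distrib]
  refine Finset.prod_congr rfl fun x _ => ?_
  match x with
  | [] => simp
  | false :: w => simp
  | true :: w => simp

lemma map_glueTree {A : Type*} [MeasurableSpace A] (ν : Measure A) [IsProbabilityMeasure ν] :
    (ν.prod ((Measure.infinitePi fun _ : List Bool => ν).prod
      (Measure.infinitePi fun _ : List Bool => ν))).map glueTree
      = Measure.infinitePi fun _ : List Bool => ν := by
  classical
  apply Measure.eq_infinitePi
  intro s t ht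
  have hm : MeasurableSet (Set.pi (s : Set (List Bool)) t) :=
    MeasurableSet.pi s.countable_toSet fun i _ => ht i
  rw [Measure.map_apply measurable_glueTree hm]
  have hpre : glueTree ⁻¹' (Set.pi (s : Set (List Bool)) t) =
      (if [] ∈ s then t [] else Set.univ) ×ˢ
      ((Set.pi (s.preimage (List.cons false) (List.cons_injective.injOn) : Finset (List Bool))
          fun w => t (false :: w)) ×ˢ
       (Set.pi (s.preimage (List.cons true) (List.cons_injective.injOn) : Finset (List Bool))
          fun w => t (true :: w))) := by
    ext ⟨a, l, r⟩
    simp only [Set.mem_preimage, Set.mem_pi, Set.mem_prod, Finset.mem_coe, Finset.mem_preimage]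
    constructor
    · intro H
      refine ⟨?_, fun w hw => H _ hw, fun w hw => H _ hw⟩
      split_ifs with h0
      · exact H _ h0
      · trivial
    · rintro ⟨h0, hl, hr⟩ w hw
      match w with
      | [] => rw [if_pos hw] at h0; exact h0
      | false :: w => exact hl w hw
      | true :: w => exact hr w hw
  rw [hpre, Measure.prod_prod, Measure.prod_prod,
    Measure.infinitePi_pi (fun _ : List Bool => ν) (fun i _ => ht _),
    Measure.infinitePi_pi (fun _ : List Bool => ν) (fun i _ => ht _),
    prod_split s (fun i => ν (t i))]
  congr 1
  split_ifs <;> simp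

/-- Let `h : Tr_A → Set Q` have `μ₀`-measurable fibers and let
`h' t = Δ (h (t↾[false])) (t []) (h (t↾[true]))`. Then the fibers of `h'` are measurable and
the induced distribution of `h'` (w.r.t. the uniform measure `μ₀`, i.e. the infinite product of
uniform measures on `A`, characterized as the projective limit of finite products) is obtained
by applying `𝓕`: `μ⃗₀(h') = 𝓕(μ⃗₀(h))`. -/
theorem inducedDist_step {A Q : Type*}
    [Fintype A] [Nonempty A] [MeasurableSpace A] [DiscreteMeasurableSpace A] [Fintype Q]
    (μ₀ : Measure (List Bool → A))
    (hμ₀ : IsProjectiveLimit μ₀ (fun I : Finset (List Bool) =>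
      Measure.pi fun _ : I => (PMF.uniformOfFintype A).toMeasure))
    (Δ : Set Q → A → Set Q → Set Q) (h : (List Bool → A) → Set Q)
    (hmeas : ∀ P : Set Q, MeasurableSet { t | h t = P }) :
    (∀ P : Set Q, MeasurableSet
      { t | Δ (h (subtree t [false])) (t []) (h (subtree t [true])) = P }) ∧
    inducedDist μ₀ (fun t => Δ (h (subtree t [false])) (t []) (h (subtree t [true])))
      = FOp Δ (inducedDist μ₀ h) := by
  classical
  have e : μ₀ = Measure.infinitePi fun _ : List Bool => (PMF.uniformOfFintype A).toMeasure :=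
    hμ₀.unique (Measure.isProjectiveLimit_infinitePi _)
  clear hμ₀
  set ν : Measure A := (PMF.uniformOfFintype A).toMeasure with hν
  have hP : IsProbabilityMeasure μ₀ := by rw [e]; infer_instance
  have hmap : (ν.prod (μ₀.prod μ₀)).map glueTree = μ₀ := by rw [e]; exact map_glueTree ν
  have hsub : ∀ v : List Bool, Measurable fun t : List Bool → A => subtree t v := fun v =>
    measurable_pi_iff.2 fun w => measurable_pi_apply (v ++ w)
  -- the elementary events
  let E : Set Q × A × Set Q → Set (List Bool → A) := fun x =>
    {t | h (subtree t [false]) = x.1 ∧ t [] = x.2.1 ∧ h (subtree t [true]) = x.2.2}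
  have hE : ∀ x, MeasurableSet (E x) := by
    intro x
    have h1 : MeasurableSet {t : List Bool → A | h (subtree t [false]) = x.1} :=
      (hsub [false]) (hmeas x.1)
    have h2 : MeasurableSet {t : List Bool → A | t [] = x.2.1} :=
      (measurable_pi_apply (X := fun _ : List Bool => A) [])
        (measurableSet_singleton x.2.1)
    have h3 : MeasurableSet {t : List Bool → A | h (subtree t [true]) = x.2.2} :=
      (hsub [true]) (hmeas x.2.2)
    exact h1.inter (h2.inter h3)
  have hEμ : ∀ x, (μ₀ (E x)).toReal =
      (1 / (Fintype.card A : ℝ)) * (inducedDist μ₀ h x.1 * inducedDist μ₀ h x.2.2) := by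
    intro x
    have hpre : glueTree ⁻¹' (E x) = {x.2.1} ×ˢ ({t | h t = x.1} ×ˢ {t | h t = x.2.2}) := by
      ext ⟨a, l, r⟩
      change (h l = x.1 ∧ a = x.2.1 ∧ h r = x.2.2) ↔ (a = x.2.1 ∧ h l = x.1 ∧ h r = x.2.2)
      tauto
    conv_lhs => rw [← hmap]
    rw [Measure.map_apply measurable_glueTree (hE x), hpre, Measure.prod_prod, Measure.prod_prod,
      hν, PMF.toMeasure_apply_singleton _ _ (measurableSet_singleton _)]
    simp [inducedDist]
  have hU : ∀ P : Set Q,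
      {t | Δ (h (subtree t [false])) (t []) (h (subtree t [true])) = P} =
      ⋃ x ∈ (Finset.univ.filter fun x : Set Q × A × Set Q => Δ x.1 x.2.1 x.2.2 = P), E x := by
    intro P
    ext t
    simp only [Set.mem_ofPred_eq, Finset.mem_filter, Finset.mem_univ, true_and, Set.mem_iUnion, E]
    constructor
    · intro H
      exact ⟨(_, _, _), H, rfl, rfl, rfl⟩
    · rintro ⟨⟨a, b, c⟩, H, h1, h2, h3⟩
      simp only at h1 h2 h3 H
      rw [h1, h2, h3, H]
  refine ⟨fun P => ?_, ?_⟩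
  · rw [hU P]
    exact Finset.measurableSet_biUnion _ fun x _ => hE x
  · funext P
    have hd : Pairwise (Function.onFun Disjoint E) := by
      intro x y hxy
      refine Set.disjoint_left.2 fun t hx hy => hxy ?_
      exact Prod.ext (hx.1.symm.trans hy.1)
        (Prod.ext (hx.2.1.symm.trans hy.2.1) (hx.2.2.symm.trans hy.2.2))
    have h1 : (μ₀ {t | Δ (h (subtree t [false])) (t []) (h (subtree t [true])) = P}).toReal =
        ∑ x ∈ (Finset.univ.filter fun x : Set Q × A × Set Q => Δ x.1 x.2.1 x.2.2 = P),
          (μ₀ (E x)).toReal := by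
      rw [hU P, measure_biUnion_finset (fun x _ y _ hxy => hd hxy) (fun x _ => hE x),
        ENNReal.toReal_sum fun x _ => measure_ne_top _ _]
    rw [inducedDist, h1, FOp, Finset.sum_congr rfl fun x _ => hEμ x, ← Finset.mul_sum]
    congr 1
    rw [← finsum_mem_coe_finset]
    simp
end

section
/- Let μ be a probability measure on a measurable space T and let h_i : T → Set Q (for i : ℕ) each have measurable fibers { t | h_i t = P } for every P : Set Q. Assume the sequence is pointwise decreasing: h_{i+1} t ⊆ h_i t for all t and i. Define h_∞ t = ⋂_{i : ℕ} h_i t. Then for every P : Set Q, lim_{i→∞} μ { t | h_i t = P } = μ { t | h_∞ t = P }. -/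
open MeasureTheory Filter

/-- Let `μ` be a probability measure on `T` and let `h i : T → Set Q` (for `i : ℕ`) have
measurable fibers, with the sequence pointwise decreasing (`h (i+1) t ⊆ h i t`). With
`h_∞ t = ⋂ i, h i t`, for every `P : Set Q` we have
`lim_{i→∞} μ { t | h i t = P } = μ { t | h_∞ t = P }`. -/
theorem tendsto_measure_fiber_of_decreasing {Q : Type*} [Fintype Q]
    {T : Type*} [MeasurableSpace T] (μ : Measure T) [IsProbabilityMeasure μ]
    (h : ℕ → T → Set Q) (hmeas : ∀ i (P : Set Q), MeasurableSet { t | h i t = P })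
    (hdec : ∀ i t, h (i + 1) t ⊆ h i t) (P : Set Q) :
    Tendsto (fun i => μ { t | h i t = P }) atTop (nhds (μ { t | (⋂ i, h i t) = P })) := by
  have key : ∀ t, ∀ᶠ i in atTop, h i t = ⋂ i, h i t := by
    intro t
    have hanti : Antitone (fun i => h i t) := antitone_nat_of_succ_le (fun i => hdec i t)
    have hq : ∀ q : Q, ∀ᶠ i in atTop, (q ∈ h i t ↔ q ∈ ⋂ i, h i t) := by
      intro q
      by_cases hq : q ∈ ⋂ i, h i t
      · exact Eventually.of_forall fun i => ⟨fun _ => hq, fun _ => Set.mem_iInter.1 hq i⟩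
      · have hq' := hq
        simp only [Set.mem_iInter, not_forall] at hq'
        obtain ⟨n, hn⟩ := hq'
        filter_upwards [eventually_ge_atTop n] with i hi
        exact ⟨fun hm => absurd (hanti hi hm) hn, fun hm => absurd hm hq⟩
    filter_upwards [eventually_all.2 hq] with i hi
    exact Set.ext hi
  refine tendsto_measure_of_tendsto_indicator_of_isFiniteMeasure atTop μ
    (fun i => hmeas i P) ?_
  intro t
  filter_upwards [key t] with i hi
  simp only [Set.mem_setOf_eq, hi]
end

section
/- Let μ be a probability measure on a measurable space T and let h_i : T → Set Q (for i : ℕ) each have measurable fibers { t | h_i t = P } for every P : Set Q. Assume the sequence is pointwise increasing: h_i t ⊆ h_{i+1} t for all t and i. Define h_∞ t = ⋃_{i : ℕ} h_i t. Then for every P : Set Q, lim_{i→∞} μ { t | h_i t = P } = μ { t | h_∞ t = P }. -/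
open MeasureTheory Filter

/-- Let `μ` be a probability measure on `T` and let `h i : T → Set Q` (for `i : ℕ`) have
measurable fibers, with the sequence pointwise increasing (`h i t ⊆ h (i+1) t`). With
`h_∞ t = ⋃ i, h i t`, for every `P : Set Q` we have
`lim_{i→∞} μ { t | h i t = P } = μ { t | h_∞ t = P }`. -/
theorem tendsto_measure_fiber_of_increasing {Q : Type*} [Fintype Q]
    {T : Type*} [MeasurableSpace T] (μ : Measure T) [IsProbabilityMeasure μ]
    (h : ℕ → T → Set Q) (hmeas : ∀ i (P : Set Q), MeasurableSet { t | h i t = P })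
    (hinc : ∀ i t, h i t ⊆ h (i + 1) t) (P : Set Q) :
    Tendsto (fun i => μ { t | h i t = P }) atTop (nhds (μ { t | (⋃ i, h i t) = P })) := by
  refine tendsto_measure_of_tendsto_indicator_of_isFiniteMeasure atTop μ
    (fun i => hmeas i P) (fun t => ?_)
  have hm : Monotone (fun i => h i t) := monotone_nat_of_le_succ (fun i => hinc i t)
  obtain ⟨n, hn⟩ := WellFoundedGT.monotone_chain_condition ⟨fun i => h i t, hm⟩
  have hn' : ∀ m, n ≤ m → h n t = h m t := hn
  have hU : (⋃ i, h i t) = h n t := by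
    apply Set.Subset.antisymm
    · refine Set.iUnion_subset (fun i => ?_)
      rw [hn' (max n i) (le_max_left _ _)]
      exact hm (le_max_right _ _)
    · exact Set.subset_iUnion (fun i => h i t) n
  filter_upwards [eventually_ge_atTop n] with m hmn
  change h m t = P ↔ (⋃ i, h i t) = P
  rw [hU, hn' m hmn]
end

section
/- Let G : (Set Q → ℝ) → (Set Q → ℝ) be continuous with respect to the product topology on (Set Q → ℝ), map distributions on 𝒫(Q) to distributions on 𝒫(Q), and be monotone with respect to ⪯ on distributions. Let β : ℕ → (Set Q → ℝ) be a sequence of distributions with β(i+1) = G(β i) and β(i+1) ⪯ β(i) for all i, converging pointwise to β_∞. Then β_∞ is a distribution, G(β_∞) = β_∞, β_∞ ⪯ β 0, and β_∞ is the ⪯-greatest such fixed point below β 0: every distribution θ with G(θ) = θ and θ ⪯ β 0 satisfies θ ⪯ β_∞. -/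
open Filter

/-- Let `G` be continuous (product topology on `Set Q → ℝ`), map distributions to distributions,
and be `⪯`-monotone on distributions. Let `β` be a sequence of distributions with
`β (i+1) = G (β i)` and `β (i+1) ⪯ β i`, converging pointwise to `β_∞`. Then `β_∞` is a
distribution, a fixed point of `G`, `β_∞ ⪯ β 0`, and `β_∞` is the `⪯`-greatest fixed point of
`G` below `β 0`. -/
theorem greatest_fixed_point_of_decreasing_iteration {Q : Type*} [Fintype Q]
    (G : (Set Q → ℝ) → (Set Q → ℝ)) (hGcont : Continuous G)
    (hGdist : ∀ α, IsDistribution α → IsDistribution (G α))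
    (hGmono : ∀ α β, IsDistribution α → IsDistribution β → DistLE α β → DistLE (G α) (G β))
    (β : ℕ → Set Q → ℝ) (hβdist : ∀ i, IsDistribution (β i))
    (hstep : ∀ i, β (i + 1) = G (β i)) (hdec : ∀ i, DistLE (β (i + 1)) (β i))
    (βinf : Set Q → ℝ)
    (hconv : ∀ P : Set Q, Tendsto (fun i => β i P) atTop (nhds (βinf P))) :
    IsDistribution βinf ∧ G βinf = βinf ∧ DistLE βinf (β 0) ∧
    ∀ θ : Set Q → ℝ, IsDistribution θ → G θ = θ → DistLE θ (β 0) → DistLE θ βinf := by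
  have hpi : Tendsto β atTop (nhds βinf) := tendsto_pi_nhds.mpr hconv
  have hsum : ∀ U : Set (Set Q), Tendsto (fun i => ∑ᶠ P ∈ U, β i P) atTop
      (nhds (∑ᶠ P ∈ U, βinf P)) := by
    intro U
    have h : ∀ f : Set Q → ℝ, ∑ᶠ P ∈ U, f P = ∑ P ∈ U.toFinite.toFinset, f P :=
      fun f => finsum_mem_eq_finite_toFinset_sum f U.toFinite
    simp only [h]
    exact tendsto_finsetSum _ (fun P _ => hconv P)
  have hle0 : ∀ i, DistLE (β i) (β 0) := by
    intro i
    induction i with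
    | zero => exact fun U _ => le_rfl
    | succ n ih => exact fun U hU => (hdec n U hU).trans (ih U hU)
  refine ⟨⟨fun P => ge_of_tendsto' (hconv P) (fun i => (hβdist i).1 P), ?_⟩, ?_, ?_, ?_⟩
  · have h1 : Tendsto (fun i => ∑ P : Set Q, β i P) atTop (nhds (∑ P : Set Q, βinf P)) :=
      tendsto_finsetSum _ (fun P _ => hconv P)
    simp only [(hβdist _).2] at h1
    exact tendsto_nhds_unique h1 tendsto_const_nhds
  · have h1 : Tendsto (fun i => β (i + 1)) atTop (nhds (G βinf)) := by
      simp only [hstep]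
      exact (hGcont.tendsto βinf).comp hpi
    exact tendsto_nhds_unique h1 (hpi.comp (tendsto_add_atTop_nat 1))
  · exact fun U hU => le_of_tendsto' (hsum U) (fun i => hle0 i U hU)
  · intro θ hθ hfix hθ0
    have h : ∀ i, DistLE θ (β i) := by
      intro i
      induction i with
      | zero => exact hθ0
      | succ n ih =>
        rw [hstep, ← hfix]
        exact hGmono _ _ hθ (hβdist n) ih
    exact fun U hU => ge_of_tendsto' (hsum U) (fun i => h i U hU)
end

section
/- Let G : (Set Q → ℝ) → (Set Q → ℝ) be continuous with respect to the product topology on (Set Q → ℝ), map distributions on 𝒫(Q) to distributions on 𝒫(Q), and be monotone with respect to ⪯ on distributions. Let β : ℕ → (Set Q → ℝ) be a sequence of distributions with β(i+1) = G(β i) and β(i) ⪯ β(i+1) for all i, converging pointwise to β_∞. Then β_∞ is a distribution, G(β_∞) = β_∞, β 0 ⪯ β_∞, and β_∞ is the ⪯-least such fixed point above β 0: every distribution θ with G(θ) = θ and β 0 ⪯ θ satisfies β_∞ ⪯ θ. -/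
open Filter

/-- Let `G` be continuous (product topology on `Set Q → ℝ`), map distributions to distributions,
and be `⪯`-monotone on distributions. Let `β` be a sequence of distributions with
`β (i+1) = G (β i)` and `β i ⪯ β (i+1)`, converging pointwise to `β_∞`. Then `β_∞` is a
distribution, a fixed point of `G`, `β 0 ⪯ β_∞`, and `β_∞` is the `⪯`-least fixed point of
`G` above `β 0`. -/
theorem least_fixed_point_of_increasing_iteration {Q : Type*} [Fintype Q]
    (G : (Set Q → ℝ) → (Set Q → ℝ)) (hGcont : Continuous G)
    (hGdist : ∀ α, IsDistribution α → IsDistribution (G α))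
    (hGmono : ∀ α β, IsDistribution α → IsDistribution β → DistLE α β → DistLE (G α) (G β))
    (β : ℕ → Set Q → ℝ) (hβdist : ∀ i, IsDistribution (β i))
    (hstep : ∀ i, β (i + 1) = G (β i)) (hinc : ∀ i, DistLE (β i) (β (i + 1)))
    (βinf : Set Q → ℝ)
    (hconv : ∀ P : Set Q, Tendsto (fun i => β i P) atTop (nhds (βinf P))) :
    IsDistribution βinf ∧ G βinf = βinf ∧ DistLE (β 0) βinf ∧
    ∀ θ : Set Q → ℝ, IsDistribution θ → G θ = θ → DistLE (β 0) θ → DistLE βinf θ := by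
  have hlim : Tendsto β atTop (nhds βinf) := tendsto_pi_nhds.2 hconv
  have hsum : ∀ U : Set (Set Q),
      Tendsto (fun i => ∑ᶠ P ∈ U, β i P) atTop (nhds (∑ᶠ P ∈ U, βinf P)) := by
    intro U
    have key : ∀ f : Set Q → ℝ, ∑ᶠ P ∈ U, f P = ∑ P ∈ (Set.toFinite U).toFinset, f P :=
      fun f => finsum_mem_eq_finite_toFinset_sum f (Set.toFinite U)
    simp only [key]
    exact tendsto_finsetSum _ fun P _ => hconv P
  refine ⟨⟨fun P => ge_of_tendsto' (hconv P) fun i => (hβdist i).1 P, ?_⟩, ?_, ?_, ?_⟩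
  · have h1 : Tendsto (fun i => ∑ P : Set Q, β i P) atTop (nhds (∑ P : Set Q, βinf P)) :=
      tendsto_finsetSum _ fun P _ => hconv P
    simp only [fun i => (hβdist i).2] at h1
    exact tendsto_nhds_unique h1 tendsto_const_nhds
  · have h1 : Tendsto (fun i => β (i + 1)) atTop (nhds βinf) :=
      hlim.comp (tendsto_add_atTop_nat 1)
    simp only [hstep] at h1
    exact tendsto_nhds_unique ((hGcont.tendsto βinf).comp hlim) h1
  · intro U hU
    have hm : Monotone (fun i => ∑ᶠ P ∈ U, β i P) :=
      monotone_nat_of_le_succ fun i => hinc i U hU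
    exact hm.ge_of_tendsto (hsum U) 0
  · intro θ hθ hfix h0
    have hall : ∀ i, DistLE (β i) θ := by
      intro i
      induction i with
      | zero => exact h0
      | succ i ih =>
        rw [hstep, ← hfix]
        exact hGmono _ _ (hβdist i) hθ ih
    intro U hU
    exact le_of_tendsto' (hsum U) fun i => hall i U hU
end
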